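/- Proposition 6: Let n ≥ 5, let ψ be a pure n-qubit state satisfying the preferred-basis condition, and let m be an integer with 1 ≤ m ≤ ⌊n/2⌋ - 1. If M(ρ_ψ) > C(m,2) + C(n-m,2) + δ_{m,2}, then ψ contains entanglement between at least m+1 qubits: ψ cannot be written (over any partition of the n qubits into nonempty blocks) as a tensor product of pure states each involving at most m qubits. -/

import Mathlib

noncomputable def pauli : ℕ → Matrix (Fin 2) (Fin 2) ℂ
  | 1 => !![0, 1; 1, 0]
  | 2 => !![0, -Complex.I; Complex.I, 0]
  | 3 => !![1, 0; 0, -1]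
  | _ => 1

/-- The `ι`-fold Kronecker product of single-qubit operators `pauli (f k)`. -/
noncomputable def kronOp {ι : Type*} [Fintype ι] [DecidableEq ι] (f : ι → ℕ) :
    Matrix (ι → Fin 2) (ι → Fin 2) ℂ :=
  Matrix.of fun x y => ∏ k, pauli (f k) (x k) (y k)

/-- Two-body correlation `T^{kl}_{ij}(ρ)`. -/
noncomputable def corr {ι : Type*} [Fintype ι] [DecidableEq ι]
    (ρ : Matrix (ι → Fin 2) (ι → Fin 2) ℂ) (k l : ι) (i j : ℕ) : ℝ :=
  ((ρ * kronOp (fun q => if q = k then i else if q = l then j else 0)).trace).re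

/-- Single-qubit Bloch vector component `b^{(q)}_i(ρ)`. -/
noncomputable def bloch {ι : Type*} [Fintype ι] [DecidableEq ι]
    (ρ : Matrix (ι → Fin 2) (ι → Fin 2) ℂ) (q : ι) (i : ℕ) : ℝ :=
  ((ρ * kronOp (fun p => if p = q then i else 0)).trace).re

/-- `M_{kl}(ρ)`. -/
noncomputable def Mkl {ι : Type*} [Fintype ι] [DecidableEq ι]
    (ρ : Matrix (ι → Fin 2) (ι → Fin 2) ℂ) (k l : ι) : ℝ :=
  ∑ i ∈ Finset.Icc 1 2, ∑ j ∈ Finset.Icc 1 2, (corr ρ k l i j) ^ 2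

/-- `M(ρ) = Σ_{k<l} M_{kl}(ρ)`. -/
noncomputable def Mtot {ι : Type*} [Fintype ι] [LinearOrder ι]
    (ρ : Matrix (ι → Fin 2) (ι → Fin 2) ℂ) : ℝ :=
  ∑ p ∈ Finset.univ.filter (fun p : ι × ι => p.1 < p.2), Mkl ρ p.1 p.2

/-- Density matrix of a pure state `ψ`: `ρ_ψ = ψ ψ†`. -/
noncomputable def pureDensity {ι : Type*} [Fintype ι] [DecidableEq ι]
    (ψ : (ι → Fin 2) → ℂ) : Matrix (ι → Fin 2) (ι → Fin 2) ℂ :=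
  Matrix.of fun x y => ψ x * (starRingEnd ℂ) (ψ y)

/-- `ψ` is a unit vector. -/
def UnitVec {ι : Type*} [Fintype ι] [DecidableEq ι] (ψ : (ι → Fin 2) → ℂ) : Prop :=
  ∑ x, Complex.normSq (ψ x) = 1

/-- Preferred-basis condition: all transverse Bloch components vanish. -/
def PreferredBasis {ι : Type*} [Fintype ι] [DecidableEq ι]
    (ρ : Matrix (ι → Fin 2) (ι → Fin 2) ℂ) : Prop :=
  ∀ q : ι, bloch ρ q 1 = 0 ∧ bloch ρ q 2 = 0

/-- `P` is a partition of `Fin n` into `k` nonempty blocks. -/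
def IsPartition {n k : ℕ} (P : Fin k → Finset (Fin n)) : Prop :=
  (∀ m, (P m).Nonempty) ∧ (∀ m m', m ≠ m' → Disjoint (P m) (P m')) ∧
    ∀ q : Fin n, ∃ m, q ∈ P m

/-- Restriction of an `n`-bit string to a block of qubits. -/
def restrictB {n : ℕ} (S : Finset (Fin n)) (f : Fin n → Fin 2) : (↥S → Fin 2) :=
  fun q => f q.val

/-- `ψ` is the tensor product, under the canonical qubit-reordering isomorphism,
of pure states on the blocks of `P`. -/
def IsProductOver {n k : ℕ} (ψ : (Fin n → Fin 2) → ℂ) (P : Fin k → Finset (Fin n)) : Prop :=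
  ∃ φ : (m : Fin k) → ((↥(P m) → Fin 2) → ℂ),
    (∀ m, UnitVec (φ m)) ∧ ∀ f : Fin n → Fin 2, ψ f = ∏ m, φ m (restrictB (P m) f)

/-!
Paulis that differ at some qubit and commute elsewhere anticommute, and for anticommuting Hermitian
involutions `A i` the squared expectations sum to at most `1`: with `B = ∑ ⟨A i⟩ • A i` one has
`0 ≤ ⟨(1 - B) ^ 2⟩ = 1 - ∑ ⟨A i⟩ ^ 2`. Applied to the families `σ₁ ⊗ σⱼ` on `k, l` and
`σ₂ ⊗ σⱼ` on `k, r`, and again with `l, r` exchanged, this gives the monogamy relation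
`M_{kl} + M_{kr} ≤ 2`. At most one `M_{kl}` then exceeds `1`, and pairing it with another one bounds
the sum of `M_{kl}` over `a ≠ 1` qubits `l` by `a`; a single `M_{kl}` is at most `2`. In a product
state the correlations between different blocks are products of Bloch components, which vanish in
the preferred basis, so with blocks of size at most `m` each row sum is at most `m - 1 + δ_{m,2}`
and `M` is at most half of `n` times that. For `m ≤ n / 2 - 1` this does not exceed
`C(m,2) + C(n-m,2) + δ_{m,2}`.
-/

section FiniteSums

lemma sum_le_card_nsmul_of_pairwise_add_le {α M : Type*} [AddCommMonoid M] [LinearOrder M]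
    [IsOrderedCancelAddMonoid M] {s : Finset α} {a : α → M} {c : M} (hs : s.card ≠ 1)
    (h : (s : Set α).Pairwise fun i j => a i + a j ≤ 2 • c) : ∑ i ∈ s, a i ≤ s.card • c := by
  classical
  by_cases hle : ∀ i ∈ s, a i ≤ c
  · exact Finset.sum_le_card_nsmul s a c hle
  push Not at hle
  obtain ⟨i, hi, hci⟩ := hle
  have hothers : ∀ j ∈ s.erase i, a j ≤ c := fun j hj => by
    obtain ⟨hji, hj⟩ := Finset.mem_erase.mp hj
    have hij := h hi hj hji.symm
    rw [two_nsmul] at hij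
    exact le_of_not_gt fun hcj => (add_lt_add hci hcj).not_ge hij
  obtain ⟨j, hj⟩ : (s.erase i).Nonempty := by
    rw [← Finset.card_pos, Finset.card_erase_of_mem hi]
    have := Finset.card_pos.mpr ⟨i, hi⟩
    omega
  have hjs := Finset.mem_erase.mp hj
  calc ∑ x ∈ s, a x = (a i + a j) + ∑ x ∈ (s.erase i).erase j, a x := by
        rw [← Finset.add_sum_erase s a hi, ← Finset.add_sum_erase _ a hj, add_assoc]
    _ ≤ 2 • c + ((s.erase i).erase j).card • c :=
        add_le_add (h hi hjs.2 hjs.1.symm) (Finset.sum_le_card_nsmul _ a c fun x hx =>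
          hothers x (Finset.mem_of_mem_erase hx))
    _ = s.card • c := by
        rw [← add_nsmul, ← Finset.card_erase_add_one hi, ← Finset.card_erase_add_one hj]
        congr 1
        omega

lemma two_nsmul_sum_lt_of_symm {ι M : Type*} [Fintype ι] [LinearOrder ι] [AddCommMonoid M]
    {f : ι → ι → M} (hf : ∀ k l, f k l = f l k) :
    2 • ∑ p : ι × ι with p.1 < p.2, f p.1 p.2 = ∑ k, ∑ l ∈ Finset.univ.erase k, f k l := by
  have hlt : ∑ p : ι × ι with p.1 < p.2, f p.1 p.2 = ∑ k, ∑ l with k < l, f k l := by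
    simp only [Finset.sum_filter, Fintype.sum_prod_type]
  have hgt : ∑ k, ∑ l with k < l, f k l = ∑ k, ∑ l with l < k, f k l := by
    simp only [Finset.sum_filter]
    rw [Finset.sum_comm]
    simp only [hf]
  have hrow (k : ι) : ∑ l ∈ Finset.univ.erase k, f k l
      = ∑ l with k < l, f k l + ∑ l with l < k, f k l := by
    rw [← Finset.sum_union (Finset.disjoint_filter.mpr fun _ _ => lt_asymm), ← Finset.filter_or]
    congr 1
    ext l
    simp [ne_comm]
  simp only [hrow, Finset.sum_add_distrib, two_nsmul, hlt, ← hgt]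

end FiniteSums

section Anticommuting

open scoped ComplexOrder

variable {κ : Type*} {s : Finset κ}

lemma sum_smul_mul_self_of_anticommute {R 𝒜 : Type*} [CommSemiring R] [Ring 𝒜] [Algebra R 𝒜]
    {A : κ → 𝒜} (hsq : ∀ i ∈ s, A i * A i = 1)
    (hanti : (s : Set κ).Pairwise fun i j => A i * A j = -(A j * A i)) (c : κ → R) :
    (∑ i ∈ s, c i • A i) * ∑ i ∈ s, c i • A i = (∑ i ∈ s, c i ^ 2) • 1 := by
  classical
  induction s using Finset.induction_on with
  | empty => simp
  | insert a t ha ih =>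
    have ih := ih (fun i hi => hsq i (Finset.mem_insert_of_mem hi)) (hanti.mono (by simp))
    have cross : A a * ∑ i ∈ t, c i • A i = -((∑ i ∈ t, c i • A i) * A a) := by
      rw [Finset.mul_sum, Finset.sum_mul, ← Finset.sum_neg_distrib]
      refine Finset.sum_congr rfl fun i hi => ?_
      rw [mul_smul_comm, smul_mul_assoc, ← smul_neg,
        hanti (by simp) (by simp [hi]) (ne_of_mem_of_not_mem hi ha).symm]
    simp only [Finset.sum_insert ha, add_mul, mul_add, ih, smul_mul_assoc, mul_smul_comm, cross,
      hsq a (Finset.mem_insert_self a t), add_smul, sq, mul_smul, smul_add, smul_neg]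
    abel

variable {X : Type*} [Fintype X] {ρ : Matrix X X ℂ}

lemma re_trace_mul_mul_self_nonneg (hρ : ρ.PosSemidef) {C : Matrix X X ℂ}
    (hC : C.IsHermitian) : 0 ≤ (ρ * (C * C)).trace.re := by
  have h := (hρ.conjTranspose_mul_mul_same C).trace_nonneg
  rw [hC.eq, mul_assoc, Matrix.trace_mul_comm, mul_assoc] at h
  exact (Complex.nonneg_iff.mp h).1

lemma im_trace_mul_eq_zero {A B : Matrix X X ℂ} (hA : A.IsHermitian)
    (hB : B.IsHermitian) : (A * B).trace.im = 0 := by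
  rw [← Complex.conj_eq_iff_im, ← Complex.star_def, ← Matrix.trace_conjTranspose,
    Matrix.conjTranspose_mul, hA.eq, hB.eq, Matrix.trace_mul_comm]

theorem sum_sq_re_trace_mul_le_one [DecidableEq X] (hρ : ρ.PosSemidef) (htr : ρ.trace = 1)
    {A : κ → Matrix X X ℂ} (hA : ∀ i ∈ s, (A i).IsHermitian) (hsq : ∀ i ∈ s, A i * A i = 1)
    (hanti : (s : Set κ).Pairwise fun i j => A i * A j = -(A j * A i)) :
    ∑ i ∈ s, (ρ * A i).trace.re ^ 2 ≤ 1 := by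
  set c : κ → ℝ := fun i => (ρ * A i).trace.re
  set B : Matrix X X ℂ := ∑ i ∈ s, c i • A i
  have hB : B.IsHermitian := by
    simp only [Matrix.IsHermitian, B, Matrix.conjTranspose_sum, Matrix.conjTranspose_smul,
      star_trivial]
    exact Finset.sum_congr rfl fun i hi => by rw [(hA i hi).eq]
  have hBB : (ρ * (B * B)).trace.re = ∑ i ∈ s, c i ^ 2 := by
    rw [sum_smul_mul_self_of_anticommute hsq hanti]
    simp only [mul_smul_comm, mul_one, Matrix.trace_smul, htr, Complex.smul_re, Complex.one_re,
      smul_eq_mul]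
  have hBρ : (ρ * B).trace.re = ∑ i ∈ s, c i ^ 2 := by
    simp [B, Matrix.mul_sum, Matrix.trace_sum, Matrix.trace_smul, c, sq]
  have hsq_nonneg := re_trace_mul_mul_self_nonneg hρ (Matrix.isHermitian_one.sub hB)
  have hexpand : ρ * ((1 - B) * (1 - B)) = ρ - ρ * B - ρ * B + ρ * (B * B) := by noncomm_ring
  rw [hexpand] at hsq_nonneg
  simp only [Matrix.trace_add, Matrix.trace_sub, Complex.add_re, Complex.sub_re, htr, hBρ, hBB,
    Complex.one_re] at hsq_nonneg
  linarith

end Anticommuting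

section PauliStrings

lemma pauli_zero : pauli 0 = 1 := rfl

lemma pauli_isHermitian (i : ℕ) : (pauli i).IsHermitian := by
  rcases i with _ | _ | _ | _ | i <;> ext a b <;> fin_cases a <;> fin_cases b <;> simp [pauli]

lemma pauli_mul_self (i : ℕ) : pauli i * pauli i = 1 := by
  rcases i with _ | _ | _ | _ | i <;> ext a b <;> fin_cases a <;> fin_cases b <;>
    simp [pauli, Matrix.mul_apply, Fin.sum_univ_two]

lemma pauli_anticommute {i j : ℕ} (hi : i ∈ Finset.Icc 1 3) (hj : j ∈ Finset.Icc 1 3)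
    (hij : i ≠ j) : pauli i * pauli j = -(pauli j * pauli i) := by
  rw [Finset.mem_Icc] at hi hj
  obtain ⟨hi₁, hi₃⟩ := hi
  obtain ⟨hj₁, hj₃⟩ := hj
  interval_cases i <;> interval_cases j <;> first
    | exact absurd rfl hij
    | (ext a b; fin_cases a <;> fin_cases b <;>
        simp [pauli, Matrix.mul_apply, Fin.sum_univ_two])

variable {ι : Type*} [Fintype ι] [DecidableEq ι]

lemma kronOp_isHermitian (f : ι → ℕ) : (kronOp f).IsHermitian := by
  ext x y
  simp [kronOp, (pauli_isHermitian _).apply]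

lemma kronOp_zero : kronOp (0 : ι → ℕ) = 1 := by
  ext x y
  simp only [kronOp, Matrix.of_apply, Pi.zero_apply, pauli_zero, Matrix.one_apply,
    Finset.prod_ite_zero, Finset.prod_const_one, Finset.mem_univ, true_imp_iff, funext_iff]

lemma kronOp_mul_apply (f g : ι → ℕ) (x y : ι → Fin 2) :
    (kronOp f * kronOp g) x y = ∏ q, (pauli (f q) * pauli (g q)) (x q) (y q) := by
  simp only [kronOp, Matrix.mul_apply, Matrix.of_apply, ← Finset.prod_mul_distrib]
  rw [Finset.prod_univ_sum, Fintype.piFinset_univ]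

lemma kronOp_mul_self (f : ι → ℕ) : kronOp f * kronOp f = 1 := by
  ext x y
  rw [kronOp_mul_apply, ← kronOp_zero]
  simp [kronOp, pauli_mul_self, pauli_zero]

lemma kronOp_anticommute {f g : ι → ℕ} {q : ι}
    (hq : pauli (f q) * pauli (g q) = -(pauli (g q) * pauli (f q)))
    (hcomm : ∀ p ≠ q, Commute (pauli (f p)) (pauli (g p))) :
    kronOp f * kronOp g = -(kronOp g * kronOp f) := by
  ext x y
  rw [Matrix.neg_apply, kronOp_mul_apply, kronOp_mul_apply, Fintype.prod_eq_mul_prod_compl q,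
    Fintype.prod_eq_mul_prod_compl q fun p => (pauli (g p) * pauli (f p)) (x p) (y p),
    hq, Matrix.neg_apply, neg_mul]
  congr 2
  refine Finset.prod_congr rfl fun p hp => ?_
  rw [(hcomm p (by simpa using hp)).eq]

/-- The Pauli string of the two-body correlation `T^{kl}_{ij}`: `σᵢ` at qubit `k` and `σⱼ` at `l`.
For `k = l` the label `i` takes precedence, as in `corr`. -/
noncomputable def pauliPair (k l : ι) (i j : ℕ) : Matrix (ι → Fin 2) (ι → Fin 2) ℂ :=
  kronOp fun q => if q = k then i else if q = l then j else 0

lemma pauliPair_anticommute_of_ne_sites (k : ι) {l r : ι} (hlr : l ≠ r) {i i' : ℕ}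
    (hi : i ∈ Finset.Icc 1 3) (hi' : i' ∈ Finset.Icc 1 3) (hii' : i ≠ i') (j j' : ℕ) :
    pauliPair k l i j * pauliPair k r i' j' = -(pauliPair k r i' j' * pauliPair k l i j) := by
  refine kronOp_anticommute (q := k) (by simpa using pauli_anticommute hi hi' hii') fun p hp => ?_
  rcases eq_or_ne p l with rfl | hpl
  · simp [hp, hlr, pauli_zero, Commute.one_right]
  · simp [hp, hpl, pauli_zero, Commute.one_left]

lemma pauliPair_anticommute_of_ne_labels {k l : ι} (hkl : k ≠ l) (i : ℕ) {j j' : ℕ}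
    (hj : j ∈ Finset.Icc 1 3) (hj' : j' ∈ Finset.Icc 1 3) (hjj' : j ≠ j') :
    pauliPair k l i j * pauliPair k l i j' = -(pauliPair k l i j' * pauliPair k l i j) := by
  refine kronOp_anticommute (q := l) ?_ fun p hp => ?_
  · simpa [hkl.symm] using pauli_anticommute hj hj' hjj'
  · simp [hp]

end PauliStrings

section Monogamy

open scoped ComplexOrder

variable {ι : Type*} [Fintype ι] [DecidableEq ι] {ρ : Matrix (ι → Fin 2) (ι → Fin 2) ℂ}

theorem sum_corr_sq_le_one (hρ : ρ.PosSemidef) (htr : ρ.trace = 1) {I J : Finset ℕ}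
    (hI : I ⊆ Finset.Icc 1 3) (hJ : J ⊆ Finset.Icc 1 3) {k : ι} {site : ℕ → ι}
    (hsite : Set.InjOn site I) (hk : ∀ i ∈ I, k ≠ site i) :
    ∑ i ∈ I, ∑ j ∈ J, corr ρ k (site i) i j ^ 2 ≤ 1 := by
  rw [← Finset.sum_product' I J fun i j => corr ρ k (site i) i j ^ 2]
  refine sum_sq_re_trace_mul_le_one hρ htr (A := fun p : ℕ × ℕ => pauliPair k (site p.1) p.1 p.2)
    (fun _ _ => kronOp_isHermitian _) (fun _ _ => kronOp_mul_self _) ?_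
  rintro ⟨i, j⟩ hij ⟨i', j'⟩ hij' hne
  obtain ⟨hi, hj⟩ := Finset.mem_product.mp hij
  obtain ⟨hi', hj'⟩ := Finset.mem_product.mp hij'
  rcases eq_or_ne i i' with rfl | hii'
  · have hjj' : j ≠ j' := fun h => hne (by rw [h])
    exact pauliPair_anticommute_of_ne_labels (hk i hi) i (hJ hj) (hJ hj') hjj'
  · exact pauliPair_anticommute_of_ne_sites k (hsite.ne hi hi' hii') (hI hi) (hI hi') hii' j j'

lemma corr_comm (ρ : Matrix (ι → Fin 2) (ι → Fin 2) ℂ) {k l : ι} (hkl : k ≠ l) (i j : ℕ) :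
    corr ρ k l i j = corr ρ l k j i := by
  unfold corr
  congr 4
  funext q
  split_ifs with hk hl
  · exact absurd (hk.symm.trans hl) hkl
  all_goals rfl

lemma Mkl_comm (ρ : Matrix (ι → Fin 2) (ι → Fin 2) ℂ) (k l : ι) : Mkl ρ k l = Mkl ρ l k := by
  rcases eq_or_ne k l with rfl | hkl
  · rfl
  · simp only [Mkl, corr_comm ρ hkl]
    exact Finset.sum_comm

lemma Mkl_eq_add (ρ : Matrix (ι → Fin 2) (ι → Fin 2) ℂ) (k l : ι) :
    Mkl ρ k l = ∑ j ∈ Finset.Icc 1 2, corr ρ k l 1 j ^ 2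
      + ∑ j ∈ Finset.Icc 1 2, corr ρ k l 2 j ^ 2 := by
  have hpair : Finset.Icc 1 2 = {1, 2} := by decide
  simp only [Mkl, hpair, Finset.sum_pair one_lt_two.ne]

lemma Mkl_le_two (hρ : ρ.PosSemidef) (htr : ρ.trace = 1) {k l : ι} (hkl : k ≠ l) :
    Mkl ρ k l ≤ 2 := by
  have half {i : ℕ} (hi : i ∈ Finset.Icc 1 3) : ∑ j ∈ Finset.Icc 1 2, corr ρ k l i j ^ 2 ≤ 1 := by
    simpa using sum_corr_sq_le_one hρ htr (I := {i}) (by simpa using hi)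
      (Finset.Icc_subset_Icc_right (by norm_num : 2 ≤ 3)) (site := fun _ => l) (by simp)
      (by simpa using hkl)
  rw [Mkl_eq_add]
  linarith [half (i := 1) (by decide), half (i := 2) (by decide)]

theorem Mkl_add_Mkl_le_two (hρ : ρ.PosSemidef) (htr : ρ.trace = 1) {k l r : ι} (hkl : k ≠ l)
    (hkr : k ≠ r) (hlr : l ≠ r) : Mkl ρ k l + Mkl ρ k r ≤ 2 := by
  have half {l r : ι} (hkl : k ≠ l) (hkr : k ≠ r) (hlr : l ≠ r) :
      ∑ j ∈ Finset.Icc 1 2, corr ρ k l 1 j ^ 2 + ∑ j ∈ Finset.Icc 1 2, corr ρ k r 2 j ^ 2 ≤ 1 := by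
    simpa using sum_corr_sq_le_one hρ htr (I := {1, 2}) (J := Finset.Icc 1 2) (by decide)
      (by decide) (k := k) (site := fun i => if i = 1 then l else r)
      (by simp [hlr]) (by simp [hkl, hkr])
  rw [Mkl_eq_add, Mkl_eq_add]
  linarith [half hkl hkr hlr, half hkr hkl hlr.symm]

theorem sum_Mkl_le_card (hρ : ρ.PosSemidef) (htr : ρ.trace = 1) {k : ι} {S : Finset ι}
    (hk : k ∉ S) : ∑ l ∈ S, Mkl ρ k l ≤ S.card + if S.card = 1 then 1 else 0 := by
  have hne {l : ι} (hl : l ∈ S) : k ≠ l := (ne_of_mem_of_not_mem hl hk).symm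
  split_ifs with hS
  · obtain ⟨l, rfl⟩ := Finset.card_eq_one.mp hS
    have := Mkl_le_two hρ htr (hne (Finset.mem_singleton_self l))
    simp only [Finset.sum_singleton, Finset.card_singleton]
    norm_num [this]
  · have h := sum_le_card_nsmul_of_pairwise_add_le (c := (1 : ℝ)) hS fun l hl r hr hlr => by
      simpa using Mkl_add_Mkl_le_two hρ htr (hne hl) (hne hr) hlr
    simpa using h

end Monogamy

section PureStates

open scoped ComplexOrder

variable {ι : Type*} [Fintype ι] [DecidableEq ι]

lemma pureDensity_posSemidef (ψ : (ι → Fin 2) → ℂ) : (pureDensity ψ).PosSemidef :=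
  Matrix.posSemidef_vecMulVec_self_star ψ

lemma pureDensity_isHermitian (ψ : (ι → Fin 2) → ℂ) : (pureDensity ψ).IsHermitian :=
  (pureDensity_posSemidef ψ).isHermitian

lemma UnitVec.trace_pureDensity {ψ : (ι → Fin 2) → ℂ} (hψ : UnitVec ψ) :
    (pureDensity ψ).trace = 1 := by
  simp only [Matrix.trace, Matrix.diag, pureDensity, Matrix.of_apply, Complex.mul_conj]
  exact_mod_cast hψ

end PureStates

section ProductStates

variable {n k : ℕ} {P : Fin k → Finset (Fin n)}

lemma IsPartition.bijective_restrictB (hP : IsPartition P) :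
    Function.Bijective fun (x : Fin n → Fin 2) b => restrictB (P b) x := by
  obtain ⟨-, hdisj, hcover⟩ := hP
  constructor
  · intro x y h
    funext q
    obtain ⟨b, hb⟩ := hcover q
    exact congrFun (congrFun h b) ⟨q, hb⟩
  · intro u
    choose β hβ using hcover
    refine ⟨fun q => u (β q) ⟨q, hβ q⟩, ?_⟩
    funext b q
    have hblock : ∀ c (hc : (q : Fin n) ∈ P c), u c ⟨q, hc⟩ = u b q := by
      intro c hc
      obtain rfl : c = b := by
        by_contra hne
        exact Finset.disjoint_left.mp (hdisj c b hne) hc q.2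
      rfl
    exact hblock _ _

lemma IsPartition.prod_eq_prod_prod (hP : IsPartition P) {M : Type*} [CommMonoid M]
    (g : Fin n → M) : ∏ q, g q = ∏ b, ∏ q : P b, g q := by
  have hcover : Finset.univ.biUnion P = Finset.univ := by
    ext q
    simp [hP.2.2 q]
  rw [← hcover, Finset.prod_biUnion fun a _ b _ hab => hP.2.1 a b hab]
  exact Finset.prod_congr rfl fun b _ => (Finset.prod_coe_sort (P b) g).symm

lemma IsPartition.sum_prod_restrictB (hP : IsPartition P) {R : Type*} [CommSemiring R]
    (g : ∀ b, (P b → Fin 2) → R) :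
    ∑ x : Fin n → Fin 2, ∏ b, g b (restrictB (P b) x) = ∏ b, ∑ u, g b u := by
  rw [Finset.prod_univ_sum, Fintype.piFinset_univ, ← hP.bijective_restrictB.sum_comp]

variable {ψ : (Fin n → Fin 2) → ℂ} {φ : ∀ b, (P b → Fin 2) → ℂ}

lemma IsPartition.trace_pureDensity_mul_kronOp (hP : IsPartition P)
    (hψ : ∀ x, ψ x = ∏ b, φ b (restrictB (P b) x)) (f : Fin n → ℕ) :
    (pureDensity ψ * kronOp f).trace
      = ∏ b, (pureDensity (φ b) * kronOp fun q : P b => f q).trace := by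
  have hentry (x y : Fin n → Fin 2) : pureDensity ψ x y * kronOp f y x
      = ∏ b, pureDensity (φ b) (restrictB (P b) x) (restrictB (P b) y)
          * kronOp (fun q : P b => f q) (restrictB (P b) y) (restrictB (P b) x) := by
    simp only [pureDensity, kronOp, Matrix.of_apply, hψ, map_prod, hP.prod_eq_prod_prod,
      ← Finset.prod_mul_distrib, restrictB]
  simp only [Matrix.trace, Matrix.diag_apply, Matrix.mul_apply, hentry]
  rw [← hP.sum_prod_restrictB]
  exact Finset.sum_congr rfl fun x _ => hP.sum_prod_restrictB fun b v =>
    pureDensity (φ b) (restrictB (P b) x) v * kronOp (fun q : P b => f q) v (restrictB (P b) x)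

lemma IsProductOver.trace_pureDensity_mul_kronOp_add (hψ : IsProductOver ψ P)
    (hP : IsPartition P) {f g : Fin n → ℕ}
    (hfg : ∀ b, (∀ q ∈ P b, f q = 0) ∨ ∀ q ∈ P b, g q = 0) :
    (pureDensity ψ * kronOp (f + g)).trace
      = (pureDensity ψ * kronOp f).trace * (pureDensity ψ * kronOp g).trace := by
  obtain ⟨φ, hφ, hprod⟩ := hψ
  simp only [hP.trace_pureDensity_mul_kronOp hprod, ← Finset.prod_mul_distrib]
  refine Finset.prod_congr rfl fun b _ => ?_
  have hone : (pureDensity (φ b) * kronOp (0 : P b → ℕ)).trace = 1 := by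
    rw [kronOp_zero, mul_one, (hφ b).trace_pureDensity]
  rcases hfg b with h | h
  · have hf : (fun q : P b => f q) = 0 := funext fun q => h q q.2
    have hg : (fun q : P b => (f + g) q) = fun q : P b => g q := funext fun q => by simp [h q q.2]
    rw [hf, hg, hone, one_mul]
  · have hg : (fun q : P b => g q) = 0 := funext fun q => h q q.2
    have hf : (fun q : P b => (f + g) q) = fun q : P b => f q := funext fun q => by simp [h q q.2]
    rw [hg, hf, hone, mul_one]

theorem IsProductOver.corr_eq_bloch_mul_bloch (hψ : IsProductOver ψ P) (hP : IsPartition P)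
    {b : Fin k} {p l : Fin n} (hp : p ∈ P b) (hl : l ∉ P b) (i j : ℕ) :
    corr (pureDensity ψ) p l i j = bloch (pureDensity ψ) p i * bloch (pureDensity ψ) l j := by
  have hpl : p ≠ l := ne_of_mem_of_not_mem hp hl
  have hsplit : (fun q => if q = p then i else if q = l then j else 0)
      = (fun q => if q = p then i else 0) + fun q => if q = l then j else 0 := by
    funext q
    by_cases hq : q = p <;> simp [hq, hpl]
  have hsupp (c : Fin k) : (∀ q ∈ P c, (if q = p then i else 0) = 0) ∨
      ∀ q ∈ P c, (if q = l then j else 0) = 0 := by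
    rcases eq_or_ne c b with rfl | hcb
    · exact .inr fun q hq => if_neg (ne_of_mem_of_not_mem hq hl)
    · exact .inl fun q hq => if_neg <|
        ne_of_mem_of_not_mem hq (Finset.disjoint_right.mp (hP.2.1 c b hcb) hp)
  have him := im_trace_mul_eq_zero (pureDensity_isHermitian ψ)
    (kronOp_isHermitian fun q => if q = p then i else 0)
  rw [corr, hsplit, hψ.trace_pureDensity_mul_kronOp_add hP hsupp, Complex.mul_re, him,
    zero_mul, sub_zero, bloch, bloch]

lemma IsProductOver.Mkl_eq_zero (hψ : IsProductOver ψ P) (hP : IsPartition P)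
    (hpb : PreferredBasis (pureDensity ψ)) {b : Fin k} {p l : Fin n} (hp : p ∈ P b)
    (hl : l ∉ P b) : Mkl (pureDensity ψ) p l = 0 := by
  simp [Mkl_eq_add, hψ.corr_eq_bloch_mul_bloch hP hp hl, (hpb p).1, (hpb p).2]

theorem IsProductOver.sum_erase_Mkl_le (hψ : IsProductOver ψ P) (hP : IsPartition P)
    (hunit : UnitVec ψ) (hpb : PreferredBasis (pureDensity ψ)) {m : ℕ}
    (hm : ∀ b, (P b).card ≤ m) (p : Fin n) :
    ∑ l ∈ Finset.univ.erase p, Mkl (pureDensity ψ) p l ≤ m - 1 + if m = 2 then 1 else 0 := by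
  obtain ⟨b, hp⟩ := hP.2.2 p
  have hcard : ((P b).erase p).card + 1 ≤ m := (Finset.card_erase_add_one hp).trans_le (hm b)
  calc ∑ l ∈ Finset.univ.erase p, Mkl (pureDensity ψ) p l
      = ∑ l ∈ (P b).erase p, Mkl (pureDensity ψ) p l := by
        refine (Finset.sum_subset (Finset.erase_subset_erase p (Finset.subset_univ _)) ?_).symm
        intro l hl hlb
        refine hψ.Mkl_eq_zero hP hpb hp fun h => hlb ?_
        exact Finset.mem_erase.mpr ⟨Finset.ne_of_mem_erase hl, h⟩
    _ ≤ ((P b).erase p).card + if ((P b).erase p).card = 1 then 1 else 0 :=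
        sum_Mkl_le_card (pureDensity_posSemidef ψ) hunit.trace_pureDensity
          (Finset.notMem_erase p _)
    _ ≤ m - 1 + if m = 2 then 1 else 0 := by
        have hnat : ((P b).erase p).card + (if ((P b).erase p).card = 1 then 1 else 0) + 1
            ≤ m + if m = 2 then 1 else 0 := by
          split_ifs <;> omega
        have hreal := (Nat.cast_le (α := ℝ)).mpr hnat
        push_cast at hreal
        linarith

end ProductStates

lemma mul_row_bound_div_two_le_choose_two {m n : ℕ} (h : 2 * m + 2 ≤ n) :
    (n : ℝ) * (m - 1 + if m = 2 then 1 else 0) / 2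
      ≤ m.choose 2 + (n - m).choose 2 + if m = 2 then 1 else 0 := by
  obtain ⟨t, rfl⟩ : ∃ t, n = m + (m + 2 + t) := ⟨n - (m + (m + 2)), by omega⟩
  rw [Nat.add_sub_cancel_left, Nat.cast_choose_two, Nat.cast_choose_two]
  push_cast
  have hmt : (0 : ℝ) ≤ t * m := by positivity
  split_ifs <;> nlinarith

theorem entanglement_depth_of_Mtot_gt_general {n : ℕ} {ψ : (Fin n → Fin 2) → ℂ}
    (hψ : UnitVec ψ) (hpb : PreferredBasis (pureDensity ψ)) {m : ℕ}
    (hM : Mtot (pureDensity ψ) > (n : ℝ) * (m - 1 + if m = 2 then 1 else 0) / 2) :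
    ¬ ∃ (k : ℕ) (P : Fin k → Finset (Fin n)),
        IsPartition P ∧ (∀ b, (P b).card ≤ m) ∧ IsProductOver ψ P := by
  rintro ⟨k, P, hP, hcard, hprod⟩
  have hrows : 2 • Mtot (pureDensity ψ) ≤ n • ((m : ℝ) - 1 + if m = 2 then 1 else 0) :=
    calc 2 • Mtot (pureDensity ψ)
        = ∑ p, ∑ l ∈ Finset.univ.erase p, Mkl (pureDensity ψ) p l :=
          two_nsmul_sum_lt_of_symm (Mkl_comm _)
      _ ≤ ∑ _p : Fin n, ((m : ℝ) - 1 + if m = 2 then 1 else 0) :=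
          Finset.sum_le_sum fun p _ => hprod.sum_erase_Mkl_le hP hψ hpb hcard p
      _ = n • ((m : ℝ) - 1 + if m = 2 then 1 else 0) := by simp
  rw [nsmul_eq_mul, nsmul_eq_mul, Nat.cast_ofNat] at hrows
  linarith

/-- Proposition 6: for `n ≥ 5`, `1 ≤ m ≤ ⌊n/2⌋ - 1`, if a
preferred-basis pure state satisfies `M(ρ_ψ) > C(m,2) + C(n-m,2) + δ_{m,2}`,
then `ψ` contains entanglement between at least `m+1` qubits: it is not a
product of pure states over any partition with all blocks of size at most `m`. -/
theorem entanglement_depth_of_Mtot_gt (n : ℕ) (hn : 5 ≤ n)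
    (ψ : (Fin n → Fin 2) → ℂ) (hψ : UnitVec ψ)
    (hpb : PreferredBasis (pureDensity ψ))
    (m : ℕ) (hm1 : 1 ≤ m) (hm2 : m ≤ n / 2 - 1)
    (hM : Mtot (pureDensity ψ)
      > (m.choose 2 : ℝ) + ((n - m).choose 2 : ℝ) + (if m = 2 then 1 else 0)) :
    ¬ ∃ (k : ℕ) (P : Fin k → Finset (Fin n)),
        IsPartition P ∧ (∀ b, (P b).card ≤ m) ∧ IsProductOver ψ P :=
  entanglement_depth_of_Mtot_gt_general hψ hpb
    ((mul_row_bound_div_two_le_choose_two (by omega)).trans_lt hM)
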